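/- Let (X,d) be a Polish space and f a continuous semi-flow on X. Suppose that: (1′) f is topologically transitive; (5) there exists an f-invariant Borel probability measure μ on X (μ((f^t)⁻¹(A)) = μ(A) for every Borel set A and every t ≥ 0) with μ(U) > 0 for every nonempty open subset U of X; and (3) there exist two points of X whose forward orbit closures are disjoint. Then (X,f) is sensitive in the sense of Guckenheimer: there exists ε > 0 such that for every x ∈ X and every neighborhood U of x, there exist y ∈ U and t > 0 with d(f^t(x), f^t(y)) ≥ ε. -/

import Mathlib

open Filter Topology Metric Set TopologicalSpace

/-- `f` is a continuous semi-flow on `X`: jointly continuous on `[0,∞) × X`,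
`f 0 x = x`, and `f s (f t x) = f (s+t) x` for `s, t ≥ 0`. -/
def IsSemiflow {X : Type*} [MetricSpace X] (f : ℝ → X → X) : Prop :=
  ContinuousOn (fun p : ℝ × X => f p.1 p.2) (Set.Ici 0 ×ˢ Set.univ) ∧
  (∀ x, f 0 x = x) ∧
  (∀ s t : ℝ, 0 ≤ s → 0 ≤ t → ∀ x, f s (f t x) = f (s + t) x)

/-- the forward orbit `O₊(f,x) = {f t x : t ≥ 0}`. -/
def posOrbit {X : Type*} [MetricSpace X] (f : ℝ → X → X) (x : X) : Set X :=
  (fun t => f t x) '' Set.Ici (0 : ℝ)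

/-- `x` is Birkhoff recurrent for `f`. -/
def BirkhoffRecurrent {X : Type*} [MetricSpace X] (f : ℝ → X → X) (x : X) : Prop :=
  ∀ ε > (0:ℝ), ∃ T > (0:ℝ), ∀ τ ≥ (0:ℝ), ∀ υ ≥ (0:ℝ),
    ∃ t : ℝ, τ < t ∧ t < τ + T ∧ dist (f υ x) (f t x) < ε

/-- `f` is topologically quasi-transitive: some forward orbit is dense. -/
def QuasiTransitive {X : Type*} [MetricSpace X] (f : ℝ → X → X) : Prop :=
  ∃ x : X, Dense (posOrbit f x)

/-- `(X,f)` is chaotic: quasi-transitive, Birkhoff recurrent points dense, and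
two motions far away from each other. -/
def Chaotic {X : Type*} [MetricSpace X] (f : ℝ → X → X) : Prop :=
  QuasiTransitive f ∧ Dense {x : X | BirkhoffRecurrent f x} ∧
  ∃ x y : X, closure (posOrbit f x) ∩ closure (posOrbit f y) = ∅

/-!
Without sensitivity, some point is Lyapunov stable up to a small tolerance, and a dense orbit that
enters its neighborhood carries the stability back to the transitive point `x`. The invariant
measure forces the return times of every neighborhood `V` of `x` to be syndetic: the preimages of
`V` along a sequence of times all have the same positive measure, so two of them intersect, while a
non-syndetic set of times avoids all differences of a suitable sequence. Together with stability
this makes `x` almost periodic up to a small error. Shadowing the orbit of an arbitrary `y` for a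
bounded time by that of `x`, we see that `y` passes close to `x`. But `x` keeps a positive distance
from every forward orbit that is not dense.
-/

open MeasureTheory

section ReturnTimes

variable {G Ω : Type*}

/-- `R` is syndetic: its gaps in the nonnegative times are bounded, i.e. it meets every
interval `[s, s + L]` with `s ≥ 0` for a suitable `L`. -/
def IsSyndetic [AddMonoid G] [Preorder G] (R : Set G) : Prop :=
  ∃ L ≥ 0, ∀ s ≥ 0, (R ∩ Icc s (s + L)).Nonempty

/-- The times `t` at which some point of `V` is back in `V`. -/
def returnTimes (f : G → Ω → Ω) (V : Set Ω) : Set G :=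
  {t | (V ∩ f t ⁻¹' V).Nonempty}

theorem IsSyndetic.of_forall_exists_sub_mem [AddCommGroup G] [PartialOrder G]
    [IsOrderedAddMonoid G] {R : Set G}
    (hR : ∀ r : ℕ → G, Monotone r → (∀ n, 0 ≤ r n) → ∃ i j, i < j ∧ r j - r i ∈ R) :
    IsSyndetic R := by
  by_contra hgap
  simp only [IsSyndetic, not_exists, not_and, not_forall, not_nonempty_iff_eq_empty] at hgap
  choose! S hS₀ hS using hgap
  -- `S (r n)` starts a gap of length `r n`, long enough to contain every `S (r n) + (r n - r i)`.
  let r : ℕ → G := fun n => (fun L => L + S L)^[n] 0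
  have r_succ (n : ℕ) : r (n + 1) = r n + S (r n) := Function.iterate_succ_apply' ..
  have r_nonneg (n : ℕ) : 0 ≤ r n := by
    induction n with
    | zero => exact le_rfl
    | succ n ih => rw [r_succ]; exact add_nonneg ih (hS₀ _ ih)
  have r_mono : Monotone r := monotone_nat_of_le_succ fun n => by
    rw [r_succ]; exact le_add_of_nonneg_right (hS₀ _ (r_nonneg n))
  obtain ⟨i, j, hij, hmem⟩ := hR r r_mono r_nonneg
  obtain ⟨k, rfl⟩ := Nat.exists_eq_succ_of_ne_zero (Nat.ne_zero_of_lt hij)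
  have hik : r i ≤ r k := r_mono (Nat.le_of_lt_succ hij)
  have hdiff : r (k + 1) - r i = S (r k) + (r k - r i) := by rw [r_succ]; abel
  have hgap_mem : r (k + 1) - r i ∈ Icc (S (r k)) (S (r k) + r k) := by
    rw [hdiff]
    exact ⟨le_add_of_nonneg_right (sub_nonneg.2 hik), by gcongr; exact sub_le_self _ (r_nonneg i)⟩
  exact eq_empty_iff_forall_notMem.1 (hS _ (r_nonneg k)) _ ⟨hmem, hgap_mem⟩

variable [AddCommGroup G] [PartialOrder G] [IsOrderedAddMonoid G] [MeasurableSpace Ω]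
  {μ : Measure Ω} [IsFiniteMeasure μ] {f : G → Ω → Ω} {V : Set Ω}

theorem exists_lt_sub_mem_returnTimes
    (hadd : ∀ s t : G, 0 ≤ s → 0 ≤ t → ∀ x, f s (f t x) = f (s + t) x)
    (hμ : ∀ t ≥ 0, MeasurePreserving (f t) μ μ)
    (hV : NullMeasurableSet V μ) (hV₀ : μ V ≠ 0)
    {r : ℕ → G} (hr : Monotone r) (hr₀ : ∀ n, 0 ≤ r n) :
    ∃ i j, i < j ∧ r j - r i ∈ returnTimes f V := by
  have hsum : μ univ < ∑' n, μ (f (r n) ⁻¹' V) := by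
    simp only [fun n => (hμ (r n) (hr₀ n)).measure_preimage hV,
      ENNReal.tsum_const_eq_top_of_ne_zero hV₀]
    exact measure_lt_top μ univ
  obtain ⟨i, j, hij, hne⟩ := exists_nonempty_inter_of_measure_univ_lt_tsum_measure μ
    (fun n => hV.preimage (hμ (r n) (hr₀ n)).quasiMeasurePreserving) hsum
  wlog hlt : i < j generalizing i j
  · exact this j i hij.symm (by rwa [inter_comm]) (hij.lt_or_gt.resolve_left hlt)
  obtain ⟨x, hxi, hxj⟩ := hne
  refine ⟨i, j, hlt, f (r i) x, hxi, ?_⟩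
  rwa [mem_preimage, hadd _ _ (sub_nonneg.2 (hr hlt.le)) (hr₀ i), sub_add_cancel]

theorem isSyndetic_returnTimes
    (hadd : ∀ s t : G, 0 ≤ s → 0 ≤ t → ∀ x, f s (f t x) = f (s + t) x)
    (hμ : ∀ t ≥ 0, MeasurePreserving (f t) μ μ)
    (hV : NullMeasurableSet V μ) (hV₀ : μ V ≠ 0) :
    IsSyndetic (returnTimes f V) :=
  .of_forall_exists_sub_mem fun _ hr hr₀ => exists_lt_sub_mem_returnTimes hadd hμ hV hV₀ hr hr₀

end ReturnTimes

section Stability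

variable {X : Type*} [PseudoMetricSpace X] {f : ℝ → X → X} {x : X} {ε : ℝ}

/-- Lyapunov stability of `x` with tolerance `ε`: all points close to `x` stay within `ε` of the
motion of `x` at all nonnegative times. A semi-flow is sensitive iff, for some `ε > 0`, no point is
stable with tolerance `ε`. -/
def IsStableAt (f : ℝ → X → X) (ε : ℝ) (x : X) : Prop :=
  ∀ᶠ y in 𝓝 x, ∀ t ≥ 0, dist (f t x) (f t y) < ε

theorem IsStableAt.isSyndetic_setOf_dist_lt (hx : IsStableAt f ε x) (hε : 0 < ε)
    (hret : ∀ V, IsOpen V → x ∈ V → IsSyndetic (returnTimes f V)) :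
    IsSyndetic {t | dist (f t x) x < 2 * ε} := by
  obtain ⟨V, hV, hVo, hxV⟩ := _root_.mem_nhds_iff.1 (hx.and (ball_mem_nhds x hε))
  obtain ⟨L, hL, hmeet⟩ := hret V hVo hxV
  refine ⟨L, hL, fun s hs => ?_⟩
  obtain ⟨t, ⟨w, hwV, htwV⟩, ht⟩ := hmeet s hs
  refine ⟨t, ?_, ht⟩
  calc dist (f t x) x ≤ dist (f t x) (f t w) + dist (f t w) x := dist_triangle ..
    _ < ε + ε := add_lt_add ((hV hwV).1 t (hs.le.trans ht.1)) (hV htwV).2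
    _ = 2 * ε := (two_mul ε).symm

end Stability

namespace IsSemiflow

variable {X : Type*} [MetricSpace X] {f : ℝ → X → X} {x y z : X} {t ε η : ℝ}

theorem continuous_apply (hf : IsSemiflow f) (ht : 0 ≤ t) : Continuous (f t) :=
  hf.1.comp_continuous (Continuous.prodMk_right t) fun _ => ⟨ht, mem_univ _⟩

theorem eventually_forall_mem_Icc_dist_lt (hf : IsSemiflow f) (x : X) (L : ℝ) (hε : 0 < ε) :
    ∀ᶠ y in 𝓝 x, ∀ t ∈ Icc 0 L, dist (f t x) (f t y) < ε := by
  have hcont : ContinuousOn (fun y t => f t y).uncurry (univ ×ˢ Icc 0 L) :=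
    hf.1.comp continuous_swap.continuousOn fun _ hp => ⟨hp.2.1, mem_univ _⟩
  obtain ⟨V, hV, hVdist⟩ :=
    isCompact_Icc.mem_uniformity_of_prod hcont (mem_univ x) (dist_mem_uniformity hε)
  rw [nhdsWithin_univ] at hV
  filter_upwards [hV] with y hy t ht
  exact dist_comm (f t y) (f t x) ▸ hVdist y hy t ht

theorem isForwardInvariant_closure_posOrbit (hf : IsSemiflow f) (x : X) :
    IsForwardInvariant f (closure (posOrbit f x)) := by
  intro t ht
  refine MapsTo.closure ?_ (hf.continuous_apply ht)
  rintro _ ⟨s, hs, rfl⟩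
  exact ⟨t + s, add_nonneg ht hs, (hf.2.2 t s ht hs x).symm⟩

theorem dense_posOrbit_of_mem_closure (hf : IsSemiflow f) (hx : Dense (posOrbit f x))
    (hxy : x ∈ closure (posOrbit f y)) : Dense (posOrbit f y) := by
  refine dense_closure.1 (hx.mono ?_)
  rintro _ ⟨t, ht, rfl⟩
  exact hf.isForwardInvariant_closure_posOrbit y ht hxy

theorem isStableAt_of_forall_pos (hf : IsSemiflow f) (hε : 0 < ε)
    (h : ∀ᶠ y in 𝓝 x, ∀ t > 0, dist (f t x) (f t y) < ε) : IsStableAt f ε x := by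
  filter_upwards [h, ball_mem_nhds x hε] with y hy hyx t ht
  rcases ht.eq_or_lt with rfl | ht
  · rwa [hf.2.1, hf.2.1, ← mem_ball']
  · exact hy t ht

theorem isStableAt_two_mul_of_dense_posOrbit (hf : IsSemiflow f) (hε : 0 < ε)
    (hz : IsStableAt f ε z) (hx : Dense (posOrbit f x)) : IsStableAt f (2 * ε) x := by
  obtain ⟨U, hU, hUo, hzU⟩ := _root_.mem_nhds_iff.1 hz
  obtain ⟨_, ⟨s, hs, rfl⟩, hsU⟩ := hx.exists_mem_open hUo ⟨z, hzU⟩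
  filter_upwards [(hf.continuous_apply hs).continuousAt.preimage_mem_nhds (hUo.mem_nhds hsU),
    hf.eventually_forall_mem_Icc_dist_lt x s (mul_pos two_pos hε)] with y hsyU hy t ht
  rcases le_total t s with hts | hst
  · exact hy t ⟨ht, hts⟩
  have hsplit (w : X) : f t w = f (t - s) (f s w) := by
    rw [hf.2.2 _ _ (sub_nonneg.2 hst) hs, sub_add_cancel]
  rw [hsplit x, hsplit y, two_mul]
  exact (dist_triangle_left _ _ (f (t - s) z)).trans_lt <|
    add_lt_add (hU hsU _ (sub_nonneg.2 hst)) (hU hsyU _ (sub_nonneg.2 hst))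

theorem exists_dist_lt_of_isSyndetic (hf : IsSemiflow f) (hx : Dense (posOrbit f x))
    (hsynd : IsSyndetic {t | dist (f t x) x < η}) (hηε : η < ε) (y : X) :
    ∃ t ≥ 0, dist x (f t y) < ε := by
  obtain ⟨L, -, hmeet⟩ := hsynd
  obtain ⟨W, hW, hWo, hyW⟩ := _root_.mem_nhds_iff.1
    (hf.eventually_forall_mem_Icc_dist_lt y L (sub_pos.2 hηε))
  obtain ⟨_, ⟨s, hs, rfl⟩, hsW⟩ := hx.exists_mem_open hWo ⟨y, hyW⟩
  obtain ⟨t, htx, hst, htL⟩ := hmeet s hs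
  have hts : 0 ≤ t - s := sub_nonneg.2 hst
  have hshadow : dist (f (t - s) y) (f t x) < ε - η := by
    have := hW hsW (t - s) ⟨hts, sub_le_iff_le_add'.2 htL⟩
    rwa [hf.2.2 _ _ hts hs, sub_add_cancel] at this
  refine ⟨t - s, hts, ?_⟩
  calc dist x (f (t - s) y) ≤ dist (f t x) x + dist (f (t - s) y) (f t x) := by
        rw [add_comm, dist_comm x]; exact dist_triangle ..
    _ < η + (ε - η) := add_lt_add htx hshadow
    _ = ε := add_sub_cancel η ε

end IsSemiflow

theorem exists_not_dense_posOrbit_of_inter_closure_eq_empty {X : Type*} [MetricSpace X]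
    {f : ℝ → X → X} (h : ∃ x y : X, closure (posOrbit f x) ∩ closure (posOrbit f y) = ∅) :
    ∃ y, ¬ Dense (posOrbit f y) := by
  obtain ⟨x, y, hxy⟩ := h
  by_contra! hdense
  exact eq_empty_iff_forall_notMem.1 hxy x ⟨hdense x x, hdense y x⟩

theorem IsSemiflow.measurePreserving {X : Type*} [MetricSpace X] [MeasurableSpace X]
    [BorelSpace X] {f : ℝ → X → X} (hf : IsSemiflow f) {μ : Measure X}
    (hinv : ∀ t ≥ (0 : ℝ), ∀ A : Set X, MeasurableSet A → μ (f t ⁻¹' A) = μ A) :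
    ∀ t ≥ 0, MeasurePreserving (f t) μ μ := fun t ht =>
  have hmeas : Measurable (f t) := (hf.continuous_apply ht).measurable
  ⟨hmeas, Measure.ext fun A hA => by
    rw [Measure.map_apply hmeas hA, hinv t ht A hA]⟩

theorem glasner_weiss_sensitivity_general {X : Type*} [MetricSpace X] [MeasurableSpace X]
    [OpensMeasurableSpace X] {f : ℝ → X → X} (hf : IsSemiflow f) (htrans : QuasiTransitive f)
    (μ : Measure X) [IsFiniteMeasure μ] [μ.IsOpenPosMeasure]
    (hμ : ∀ t ≥ 0, MeasurePreserving (f t) μ μ)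
    (hnotdense : ∃ y, ¬ Dense (posOrbit f y)) :
    ∃ ε : ℝ, 0 < ε ∧ ∀ x : X, ∀ U ∈ 𝓝 x, ∃ y ∈ U, ∃ t : ℝ, 0 < t ∧
      ε ≤ dist (f t x) (f t y) := by
  obtain ⟨x, hx⟩ := htrans
  obtain ⟨y, hy⟩ := hnotdense
  obtain ⟨δ, hδ, hfar⟩ : ∃ δ > 0, ∀ t ≥ 0, δ ≤ dist x (f t y) := by
    have hxy : x ∉ closure (posOrbit f y) := mt (hf.dense_posOrbit_of_mem_closure hx) hy
    simpa [Metric.mem_closure_iff, posOrbit] using hxy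
  refine ⟨δ / 5, by positivity, fun z U hU => ?_⟩
  by_contra! hz
  have hstable : IsStableAt f (2 * (δ / 5)) x :=
    hf.isStableAt_two_mul_of_dense_posOrbit (by positivity)
      (hf.isStableAt_of_forall_pos (by positivity) (eventually_of_mem hU hz)) hx
  have hsynd : IsSyndetic {t | dist (f t x) x < 2 * (2 * (δ / 5))} :=
    hstable.isSyndetic_setOf_dist_lt (by positivity) fun V hVo hxV =>
      isSyndetic_returnTimes hf.2.2 hμ hVo.measurableSet.nullMeasurableSet
        (hVo.measure_ne_zero μ ⟨x, hxV⟩)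
  obtain ⟨t, ht, hclose⟩ := hf.exists_dist_lt_of_isSyndetic (ε := δ) hx hsynd (by linarith) y
  exact hclose.not_ge (hfar t ht)

/-- Glasner–Weiss, continuous-time version: transitivity, a fully
supported invariant probability measure, and two far-away motions imply
Guckenheimer sensitivity. -/
theorem glasner_weiss_sensitivity {X : Type*} [MetricSpace X] [CompleteSpace X]
    [SeparableSpace X] [MeasurableSpace X] [BorelSpace X]
    (f : ℝ → X → X) (hf : IsSemiflow f)
    (htrans : ∃ x : X, ∃ ε : ℝ, 0 < ε ∧ Dense ((fun t => f t x) '' Set.Ici ε))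
    (μ : MeasureTheory.Measure X) [MeasureTheory.IsProbabilityMeasure μ]
    (hinv : ∀ t ≥ (0:ℝ), ∀ A : Set X, MeasurableSet A → μ (f t ⁻¹' A) = μ A)
    (hpos : ∀ U : Set X, IsOpen U → U.Nonempty → 0 < μ U)
    (hfar : ∃ x y : X, closure (posOrbit f x) ∩ closure (posOrbit f y) = ∅) :
    ∃ ε : ℝ, 0 < ε ∧ ∀ x : X, ∀ U ∈ 𝓝 x, ∃ y ∈ U, ∃ t : ℝ, 0 < t ∧
      ε ≤ dist (f t x) (f t y) := by
  have : μ.IsOpenPosMeasure := ⟨fun U hUo hne => (hpos U hUo hne).ne'⟩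
  obtain ⟨x, ε, hε, hx⟩ := htrans
  exact glasner_weiss_sensitivity_general hf ⟨x, hx.mono (image_mono (Ici_subset_Ici.2 hε.le))⟩ μ
    (hf.measurePreserving hinv) (exists_not_dense_posOrbit_of_inter_closure_eq_empty hfar)
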